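/- Let h = f0*g - g0*f componentwise, i.e. h_i = f0*g_i + f_i*g0 for i = 0,1,2,3, where f0,f1,f2,f3 ∈ K[s,u] and g0,g1,g2,g3 ∈ K[t,v]. Then for any point (s0,u0,t0,v0), all four polynomials h_0,h_1,h_2,h_3 vanish at (s0,u0,t0,v0) if and only if f0(s0,u0) = 0 and g0(t0,v0) = 0, provided gcd(f0,f1,f2,f3) = 1 and gcd(g0,g1,g2,g3) = 1 and the f_i have no common zero when f0 ≠ 0 at that point (i.e., (f0,...,f3) and (g0,...,g3) each have no common projective zero). -/

import Mathlib

open MvPolynomial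

section

variable {ι R : Type*} {i₀ : ι}

theorem forall_mul_add_mul_eq_zero_iff [NonAssocSemiring R] [NoZeroDivisors R] [NeZero (2 : R)]
    {a b : ι → R} (ha : a ≠ 0) (hb : b ≠ 0) :
    (∀ i, a i₀ * b i + a i * b i₀ = 0) ↔ a i₀ = 0 ∧ b i₀ = 0 := by
  refine ⟨fun h ↦ ?_, fun ⟨ha₀, hb₀⟩ i ↦ by rw [ha₀, hb₀, zero_mul, mul_zero, add_zero]⟩
  have hb₀_of_ha₀ (ha₀ : a i₀ = 0) : b i₀ = 0 := by
    obtain ⟨i, hi⟩ := Function.ne_iff.mp ha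
    have hmul : a i * b i₀ = 0 := by simpa only [ha₀, zero_mul, zero_add] using h i
    exact (mul_eq_zero.mp hmul).resolve_left hi
  have ha₀_of_hb₀ (hb₀ : b i₀ = 0) : a i₀ = 0 := by
    obtain ⟨i, hi⟩ := Function.ne_iff.mp hb
    have hmul : a i₀ * b i = 0 := by simpa only [hb₀, mul_zero, add_zero] using h i
    exact (mul_eq_zero.mp hmul).resolve_right hi
  have hmul₀ : a i₀ * b i₀ = 0 := by
    have htwo : 2 * (a i₀ * b i₀) = 0 := by rw [two_mul, h i₀]
    exact (mul_eq_zero.mp htwo).resolve_left two_ne_zero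
  rcases mul_eq_zero.mp hmul₀ with ha₀ | hb₀
  · exact ⟨ha₀, hb₀_of_ha₀ ha₀⟩
  · exact ⟨ha₀_of_hb₀ hb₀, hb₀⟩

theorem stmt_0_general {σ τ : Type*} [CommSemiring R] [NoZeroDivisors R] [NeZero (2 : R)]
    {f : ι → MvPolynomial σ R} {g : ι → MvPolynomial τ R} {p : σ → R} {q : τ → R}
    (hf : ∃ i, eval p (f i) ≠ 0) (hg : ∃ i, eval q (g i) ≠ 0) :
    (∀ i, eval p (f i₀) * eval q (g i) + eval p (f i) * eval q (g i₀) = 0) ↔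
      eval p (f i₀) = 0 ∧ eval q (g i₀) = 0 :=
  forall_mul_add_mul_eq_zero_iff (a := fun i ↦ eval p (f i)) (b := fun i ↦ eval q (g i))
    (Function.ne_iff.mpr hf) (Function.ne_iff.mpr hg)

end

/-- Basepoint lemma for translational surfaces: all four `h i = f 0 * g i + f i * g 0`
vanish at a point of `ℙ¹ × ℙ¹` iff `f 0` and `g 0` vanish there. -/
theorem stmt_0 {K : Type*} [Field K] [IsAlgClosed K] [CharZero K]
    (m n : ℕ) (f g : Fin 4 → MvPolynomial (Fin 2) K)
    (hf : ∀ i, (f i).IsHomogeneous m) (hg : ∀ i, (g i).IsHomogeneous n)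
    (hfgcd : ∀ d : MvPolynomial (Fin 2) K, (∀ i, d ∣ f i) → IsUnit d)
    (hggcd : ∀ d : MvPolynomial (Fin 2) K, (∀ i, d ∣ g i) → IsUnit d)
    (hfbp : ∀ p : Fin 2 → K, p ≠ 0 → ∃ i, eval p (f i) ≠ 0)
    (hgbp : ∀ q : Fin 2 → K, q ≠ 0 → ∃ i, eval q (g i) ≠ 0)
    (p q : Fin 2 → K) (hp : p ≠ 0) (hq : q ≠ 0) :
    (∀ i, eval p (f 0) * eval q (g i) + eval p (f i) * eval q (g 0) = 0) ↔
      eval p (f 0) = 0 ∧ eval q (g 0) = 0 :=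
  stmt_0_general (hfbp p hp) (hgbp q hq)
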